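/- Let γ ≥ 0, let S be a finite set with |S| ≥ 2, and let P : S → ℝ satisfy P(x) > 0 for all x ∈ S and ∑_{x∈S} P(x) = 1. Suppose α > 0 and Q* : S → ℝ satisfy 0 < Q*(x) < 1, L'_γ(Q*(x)) = -α/P(x) for all x ∈ S, and ∑_{x∈S} Q*(x) = 1. Let X be a finite set containing S and let Q : X → ℝ satisfy Q(y) ≥ 0 for all y ∈ X, ∑_{y∈X} Q(y) = 1, and Q(x) > 0 for all x ∈ S. Then ∑_{x∈S} P(x)·(1-Q(x))^γ·log(1/Q(x)) ≥ H_γ(P,Q*) + α·(1 − ∑_{x∈S} Q(x)) ≥ H_γ(P,Q*), where H_γ(P,Q*) = ∑_{x∈S} P(x)·(1-Q*(x))^γ·log(1/Q*(x)). -/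

import Mathlib

/-- The closed form of the first derivative of the focal-loss,
`L'_γ(p) = -(1-p)^(γ-1) (γ log(1/p) + (1-p)/p)`. -/
noncomputable def focalLossDeriv (γ p : ℝ) : ℝ :=
  -((1 - p) ^ (γ - 1) * (γ * Real.log (1 / p) + (1 - p) / p))

lemma log_ratio_anti {p q : ℝ} (hp : 0 < p) (hpq : p ≤ q) (hq : q < 1) :
    Real.log (1 / q) / (1 - q) ≤ Real.log (1 / p) / (1 - p) := by
  have h1 : 0 < 1 - q := by linarith
  have h2 : 0 < 1 - p := by linarith
  have hc := strictConcaveOn_log_Ioi.concaveOn.2 (show p ∈ Set.Ioi (0 : ℝ) from hp)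
    (show (1 : ℝ) ∈ Set.Ioi (0 : ℝ) from Set.mem_Ioi.2 one_pos)
    (div_nonneg h1.le h2.le : 0 ≤ (1 - q) / (1 - p))
    (div_nonneg (by linarith) h2.le : 0 ≤ (q - p) / (1 - p))
    (by field_simp; ring)
  have e : ((1 - q) / (1 - p)) • p + ((q - p) / (1 - p)) • (1 : ℝ) = q := by
    simp only [smul_eq_mul]; field_simp; ring
  rw [e] at hc
  simp only [smul_eq_mul, Real.log_one, mul_zero, add_zero] at hc
  rw [one_div, one_div, Real.log_inv, Real.log_inv, div_le_div_iff₀ h1 h2]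
  rw [div_mul_eq_mul_div, div_le_iff₀ h2] at hc
  linarith

lemma focalLossDeriv_eq {γ p : ℝ} (hp : p < 1) :
    focalLossDeriv γ p =
      -((1 - p) ^ γ * (γ * (Real.log (1 / p) / (1 - p)) + 1 / p)) := by
  have h : 0 < 1 - p := by linarith
  unfold focalLossDeriv
  rw [Real.rpow_sub_one h.ne']
  field_simp

lemma focalLossDeriv_mono {γ : ℝ} (hγ : 0 ≤ γ) :
    MonotoneOn (focalLossDeriv γ) (Set.Ioo 0 1) := by
  intro p hp q hq hpq
  have h1 : 0 < 1 - q := by linarith [hq.2]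
  have h2 : 0 < 1 - p := by linarith [hp.2]
  rw [focalLossDeriv_eq hp.2, focalLossDeriv_eq hq.2, neg_le_neg_iff]
  have hl : 0 ≤ Real.log (1 / q) :=
    Real.log_nonneg (by rw [le_div_iff₀ hq.1]; linarith)
  have hq0 := hq.1
  apply mul_le_mul
  · exact Real.rpow_le_rpow h1.le (by linarith) hγ
  · exact add_le_add (mul_le_mul_of_nonneg_left (log_ratio_anti hp.1 hpq hq.2) hγ)
      (one_div_le_one_div_of_le hp.1 hpq)
  · positivity
  · positivity

lemma focalLoss_hasDerivAt {γ p : ℝ} (hp : p ∈ Set.Ioo (0 : ℝ) 1) :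
    HasDerivAt (fun p : ℝ => (1 - p) ^ γ * Real.log (1 / p)) (focalLossDeriv γ p) p := by
  have h : 0 < 1 - p := by linarith [hp.2]
  have hp0 := hp.1
  have a := ((hasDerivAt_id p).const_sub 1).rpow_const (p := γ) (Or.inl h.ne')
  have b := (Real.hasDerivAt_log hp0.ne').neg
  have c := a.mul b
  have e : (fun p : ℝ => (1 - p) ^ γ * Real.log (1 / p)) =
      (fun x => (1 - id x) ^ γ) * (-Real.log) := by
    funext x; simp [one_div, Real.log_inv]
  rw [e]
  refine c.congr_deriv ?_
  unfold focalLossDeriv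
  simp only [id, Pi.neg_apply, one_div, Real.log_inv]
  rw [Real.rpow_sub_one h.ne']
  field_simp
  ring

lemma focalLoss_tangent {γ p q : ℝ} (hγ : 0 ≤ γ) (hp : p ∈ Set.Ioo (0 : ℝ) 1)
    (hq : q ∈ Set.Ioo (0 : ℝ) 1) :
    (1 - p) ^ γ * Real.log (1 / p) + focalLossDeriv γ p * (q - p) ≤
      (1 - q) ^ γ * Real.log (1 / q) := by
  have hc : ConvexOn ℝ (Set.Ioo (0 : ℝ) 1)
      (fun p : ℝ => (1 - p) ^ γ * Real.log (1 / p)) := by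
    apply MonotoneOn.convexOn_of_deriv (convex_Ioo 0 1)
    · exact fun x hx => (focalLoss_hasDerivAt hx).continuousAt.continuousWithinAt
    · rw [interior_Ioo]
      exact fun x hx => (focalLoss_hasDerivAt hx).differentiableAt.differentiableWithinAt
    · rw [interior_Ioo]
      exact (focalLossDeriv_mono hγ).congr fun x hx => (focalLoss_hasDerivAt hx).deriv.symm
  rcases lt_trichotomy p q with h | h | h
  · have := hc.le_slope_of_hasDerivAt hp hq h (focalLoss_hasDerivAt hp)
    rw [slope_def_field, le_div_iff₀ (by linarith)] at this
    linarith
  · subst h; simp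
  · have := hc.slope_le_of_hasDerivAt hq hp h (focalLoss_hasDerivAt hp)
    rw [slope_def_field, div_le_iff₀ (by linarith)] at this
    linarith

/-- the stationary point `Q*` of the focal-entropy is a global
minimizer: for any probability vector `Q` on a finite superset `X ⊇ S` which is
positive on `S`,
`H_γ(P,Q) ≥ H_γ(P,Q*) + α (1 − ∑_{x∈S} Q x) ≥ H_γ(P,Q*)`. -/
theorem focalEntropy_ge_of_stationary
    {X : Type*} [Fintype X] (S : Finset X) (hS : 2 ≤ S.card)
    (γ : ℝ) (hγ : 0 ≤ γ)
    (P : X → ℝ) (hP : ∀ x ∈ S, 0 < P x) (hPsum : ∑ x ∈ S, P x = 1)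
    (α : ℝ) (hα : 0 < α)
    (Qstar : X → ℝ)
    (hQstar : ∀ x ∈ S, 0 < Qstar x ∧ Qstar x < 1 ∧
      focalLossDeriv γ (Qstar x) = -α / P x)
    (hQstarsum : ∑ x ∈ S, Qstar x = 1)
    (Q : X → ℝ) (hQ0 : ∀ y, 0 ≤ Q y) (hQsum : ∑ y, Q y = 1)
    (hQpos : ∀ x ∈ S, 0 < Q x) :
    (∑ x ∈ S, P x * (1 - Q x) ^ γ * Real.log (1 / Q x) ≥
      (∑ x ∈ S, P x * (1 - Qstar x) ^ γ * Real.log (1 / Qstar x)) +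
        α * (1 - ∑ x ∈ S, Q x)) ∧
    ((∑ x ∈ S, P x * (1 - Qstar x) ^ γ * Real.log (1 / Qstar x)) +
        α * (1 - ∑ x ∈ S, Q x) ≥
      ∑ x ∈ S, P x * (1 - Qstar x) ^ γ * Real.log (1 / Qstar x)) := by
  have hle : ∑ x ∈ S, Q x ≤ 1 := by
    rw [← hQsum]
    exact Finset.sum_le_sum_of_subset_of_nonneg (Finset.subset_univ S) fun y _ _ => hQ0 y
  have hlt : ∀ x ∈ S, Q x < 1 := by
    intro x hx
    obtain ⟨y, hy, hyx⟩ := Finset.exists_mem_ne (by omega : 1 < S.card) x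
    exact (Finset.single_lt_sum hyx hx hy (hQpos y hy) fun k hk _ => (hQpos k hk).le).trans_le hle
  constructor
  · have key : ∀ x ∈ S, P x * (1 - Qstar x) ^ γ * Real.log (1 / Qstar x)
        + α * (Qstar x - Q x) ≤ P x * (1 - Q x) ^ γ * Real.log (1 / Q x) := by
      intro x hx
      obtain ⟨h0, h1, h2⟩ := hQstar x hx
      have hPx := hP x hx
      have t := mul_le_mul_of_nonneg_left
        (focalLoss_tangent hγ ⟨h0, h1⟩ ⟨hQpos x hx, hlt x hx⟩) hPx.le
      rw [h2] at t
      have e : P x * (-α / P x * (Q x - Qstar x)) = α * (Qstar x - Q x) := by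
        field_simp; ring
      rw [mul_add, e] at t
      linarith
    have := Finset.sum_le_sum key
    rw [Finset.sum_add_distrib, ← Finset.mul_sum, Finset.sum_sub_distrib, hQstarsum] at this
    exact this
  · have := mul_nonneg hα.le (sub_nonneg.2 hle)
    linarith
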